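/- Let k ≥ 2 and p ≥ 2 be integers, let A ∈ ℝ^{d×d} be any real matrix, let S ∈ ℝ^{d×(k+p)} be a random matrix with i.i.d. standard Gaussian N(0,1) entries, and let ω ↦ Q(ω) ∈ ℝ^{d×(k+p)} be any measurable map such that for every outcome ω, Q(ω)ᵀQ(ω) = I_{k+p} and the column space of A·S(ω) is contained in the column space of Q(ω). Then for every matrix B ∈ ℝ^{d×d} with rank(B) ≤ k, E[‖(I − QQᵀ)A‖_F²] ≤ (1 + k/(p−1))·‖A − B‖_F². -/

import Mathlib

open MeasureTheory Matrix

/-- The Frobenius norm of a real matrix. -/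
noncomputable def frobNorm {m n : ℕ} (M : Matrix (Fin m) (Fin n) ℝ) : ℝ :=
  Real.sqrt (∑ i, ∑ j, (M i j) ^ 2)

/-- The law of a `d × n` random matrix with i.i.d. standard Gaussian entries
(as a product measure on `Fin d → Fin n → ℝ`). -/
noncomputable def gaussMeasure (d n : ℕ) : Measure (Fin d → Fin n → ℝ) :=
  Measure.pi fun _ => Measure.pi fun _ => ProbabilityTheory.gaussianReal 0 1

/-!
A vector `w` that depends only on some rows of the sketch yields a linear relation between the
columns of the residual. An orthonormal eigenbasis `b` of `Bᵀ * B` has at most `rank B` vectors,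
indexed by `K`, that `B` does not kill, so that the tail `τ = ∑ j ∉ K, ‖A (b j)‖ ^ 2` is at most
`‖A - B‖_F ^ 2`. By rotation invariance the coordinates `t j` of the sketch `S` in this basis are
again independent standard Gaussian vectors, and `A * S` sends `w` to `∑ j, ⟪t j, w⟫ • A (b j)`.
The residual operator `R = 1 - Q * Qᵀ` is a contraction annihilating all of these vectors.

For `i ∈ K` let `w` be the projection of `t i` onto the orthogonal complement of the other `t j`
with `j ∈ K`. Then `‖w‖ ^ 2 • R (A (b i)) = -R (∑ j ∉ K, ⟪t j, w⟫ • A (b j))`, and averaging over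
the `t j` with `j ∉ K`, which are independent of `w`, gives
`E ‖R (A (b i))‖ ^ 2 ≤ τ * E (‖w‖ ^ 2)⁻¹`. For a sketch with `n` columns, `w` is a standard
Gaussian vector in a subspace of dimension at least `n - |K| + 1`, and
`E (‖w‖ ^ 2)⁻¹ = 1 / (dim - 2)`, as one sees by writing `1 / a` as a Laplace integral. Summing over
`i ∈ K` and adding the tail gives the factor `1 + |K| / (n - |K| - 1)`.
-/

open ProbabilityTheory Module
open scoped ENNReal RealInnerProductSpace

section LinearAlgebra

variable {ι κ G F : Type*} [Fintype ι] [Fintype κ]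
  [NormedAddCommGroup G] [InnerProductSpace ℝ G] [FiniteDimensional ℝ G]
  [NormedAddCommGroup F] [InnerProductSpace ℝ F] [FiniteDimensional ℝ F]

theorem sum_norm_sq_apply_orthonormalBasis_eq (T : G →ₗ[ℝ] F) (b : OrthonormalBasis ι ℝ G)
    (c : OrthonormalBasis κ ℝ G) : ∑ i, ‖T (b i)‖ ^ 2 = ∑ i, ‖T (c i)‖ ^ 2 := by
  trans LinearMap.trace ℝ G (T.adjoint ∘ₗ T)
  · simp [LinearMap.trace_eq_sum_inner _ b, LinearMap.adjoint_inner_right]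
  · simp [LinearMap.trace_eq_sum_inner _ c, LinearMap.adjoint_inner_right]

theorem ofReal_frobNorm_sq_eq_sum_enorm_sq {m n : ℕ} (M : Matrix (Fin m) (Fin n) ℝ)
    (b : OrthonormalBasis ι ℝ (EuclideanSpace ℝ (Fin n))) :
    ENNReal.ofReal (frobNorm M ^ 2) = ∑ j, ‖M.toEuclideanLin (b j)‖ₑ ^ 2 := by
  have frobNorm_sq : frobNorm M ^ 2 = ∑ j, ‖M.toEuclideanLin (b j)‖ ^ 2 := by
    rw [sum_norm_sq_apply_orthonormalBasis_eq _ b (EuclideanSpace.basisFun _ ℝ), frobNorm,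
      Real.sq_sqrt (by positivity), Finset.sum_comm]
    simp [EuclideanSpace.real_norm_sq_eq, toLpLin_apply]
  rw [frobNorm_sq, ENNReal.ofReal_sum_of_nonneg fun _ _ ↦ by positivity]
  simp_rw [ENNReal.ofReal_pow (norm_nonneg _), ofReal_norm]

theorem sum_compl_enorm_sq_le_ofReal_frobNorm_sub_sq [DecidableEq ι] {m n : ℕ}
    (A : Matrix (Fin m) (Fin n) ℝ) {B : Matrix (Fin m) (Fin n) ℝ}
    {b : OrthonormalBasis ι ℝ (EuclideanSpace ℝ (Fin n))} {K : Finset ι}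
    (hB : ∀ j ∉ K, B.toEuclideanLin (b j) = 0) :
    ∑ j ∈ Kᶜ, ‖A.toEuclideanLin (b j)‖ₑ ^ 2 ≤ ENNReal.ofReal (frobNorm (A - B) ^ 2) :=
  calc ∑ j ∈ Kᶜ, ‖A.toEuclideanLin (b j)‖ₑ ^ 2
      = ∑ j ∈ Kᶜ, ‖(A - B).toEuclideanLin (b j)‖ₑ ^ 2 := Finset.sum_congr rfl fun j hj ↦ by
        rw [map_sub, LinearMap.sub_apply, hB j (Finset.mem_compl.1 hj), sub_zero]
    _ ≤ ∑ j, ‖(A - B).toEuclideanLin (b j)‖ₑ ^ 2 := Finset.sum_le_univ_sum_of_nonneg fun _ ↦ zero_le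
    _ = ENNReal.ofReal (frobNorm (A - B) ^ 2) := (ofReal_frobNorm_sq_eq_sum_enorm_sq _ b).symm

theorem exists_orthonormalBasis_card_le_apply_eq_zero {n : ℕ} (hn : finrank ℝ G = n)
    (T : G →ₗ[ℝ] F) :
    ∃ (b : OrthonormalBasis (Fin n) ℝ G) (K : Finset (Fin n)),
      K.card ≤ finrank ℝ (LinearMap.range T) ∧ ∀ j ∉ K, T (b j) = 0 := by
  classical
  have hT : (T.adjoint ∘ₗ T).IsSymmetric := T.isSymmetric_adjoint_comp_self
  let b := hT.eigenvectorBasis hn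
  have orthogonal {i j : Fin n} (hij : i ≠ j) : ⟪T (b i), T (b j)⟫ = 0 := by
    rw [← LinearMap.adjoint_inner_right, ← LinearMap.comp_apply, hT.apply_eigenvectorBasis,
      inner_smul_right, b.orthonormal.2 hij, mul_zero]
  let K : Finset (Fin n) := {j | T (b j) ≠ 0}
  have independent : LinearIndependent ℝ fun j : K ↦ T.rangeRestrict (b j) := by
    refine linearIndependent_of_ne_zero_of_inner_eq_zero (fun j h ↦ ?_) fun i j hij ↦ ?_
    · exact (Finset.mem_filter.1 j.2).2 (congrArg Subtype.val h)
    · exact orthogonal (Subtype.coe_ne_coe.2 hij)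
  refine ⟨b, K, ?_, fun j hj ↦ by simpa [K] using hj⟩
  simpa using independent.fintype_card_le_finrank

theorem enorm_mul_enorm_apply_le [DecidableEq ι] {V W : Type*}
    [SeminormedAddCommGroup V] [NormedSpace ℝ V] [SeminormedAddCommGroup W] [NormedSpace ℝ W]
    {R : V →ₗ[ℝ] W} (hR : ∀ v, ‖R v‖ₑ ≤ ‖v‖ₑ) {a : ι → V} {c : ι → ℝ}
    (h : R (∑ j, c j • a j) = 0) {K : Finset ι} {i : ι} (hi : i ∈ K)
    (hc : ∀ j ∈ K.erase i, c j = 0) :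
    ‖c i‖ₑ * ‖R (a i)‖ₑ ≤ ‖∑ j ∈ Kᶜ, c j • a j‖ₑ := by
  have split : ∑ j, c j • a j = c i • a i + ∑ j ∈ Kᶜ, c j • a j := by
    rw [← Finset.sum_add_sum_compl K, ← Finset.add_sum_erase K _ hi,
      Finset.sum_eq_zero (s := K.erase i) fun j hj ↦ by rw [hc j hj, zero_smul], add_zero]
  rw [split, map_add, map_smul] at h
  calc ‖c i‖ₑ * ‖R (a i)‖ₑ = ‖R (∑ j ∈ Kᶜ, c j • a j)‖ₑ := by
        rw [← enorm_smul, eq_neg_of_add_eq_zero_left h, enorm_neg]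
    _ ≤ _ := hR _

theorem finrank_le_finrank_orthogonal_span_image_add_card {α : Type*} (x : α → G) (s : Finset α) :
    finrank ℝ G ≤ finrank ℝ (Submodule.span ℝ (x '' s))ᗮ + s.card := by
  classical
  rw [← (Submodule.span ℝ (x '' s)).finrank_add_finrank_orthogonal, add_comm, ← s.coe_image]
  gcongr
  exact (finrank_span_finset_le_card _).trans Finset.card_image_le

end LinearAlgebra

section OrthogonalProjection

open scoped Matrix.Norms.L2Operator

variable {m n r : Type*} [Fintype m] [Fintype n] [Fintype r] [DecidableEq m] [DecidableEq n]
  {Q : Matrix m n ℝ}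

theorem isStarProjection_one_sub_mul_transpose (hQ : Qᵀ * Q = 1) :
    IsStarProjection (1 - Q * Qᵀ) := by
  refine IsStarProjection.one_sub ⟨?_, ?_⟩
  · rw [IsIdempotentElem, Matrix.mul_assoc, ← Matrix.mul_assoc Qᵀ, hQ, Matrix.one_mul]
  · simp [IsSelfAdjoint, star_eq_conjTranspose]

theorem norm_toEuclideanLin_one_sub_mul_transpose_le (hQ : Qᵀ * Q = 1) (v : EuclideanSpace ℝ m) :
    ‖(1 - Q * Qᵀ).toEuclideanLin v‖ ≤ ‖v‖ := by
  refine (Matrix.l2_opNorm_mulVec (1 - Q * Qᵀ) v).trans ?_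
  exact mul_le_of_le_one_left (norm_nonneg v) (isStarProjection_one_sub_mul_transpose hQ).norm_le

theorem one_sub_mul_transpose_mul_eq_zero (hQ : Qᵀ * Q = 1) {M : Matrix m r ℝ}
    (h : LinearMap.range M.mulVecLin ≤ LinearMap.range Q.mulVecLin) : (1 - Q * Qᵀ) * M = 0 := by
  classical
  refine Matrix.ext_of_mulVec_single fun j ↦ ?_
  obtain ⟨y, hy⟩ := h ⟨Pi.single j 1, rfl⟩
  simp only [mulVecLin_apply] at hy
  rw [← mulVec_mulVec, ← hy, mulVec_mulVec, Matrix.sub_mul, Matrix.mul_assoc, hQ, Matrix.one_mul,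
    Matrix.mul_one, sub_self, zero_mulVec, zero_mulVec]

end OrthogonalProjection

section Gaussian

variable {E : Type*} [NormedAddCommGroup E] [InnerProductSpace ℝ E] [FiniteDimensional ℝ E]
  [MeasurableSpace E] [BorelSpace E]

theorem map_stdGaussian_of_forall_inner_eq {F : Type*} [NormedAddCommGroup F]
    [InnerProductSpace ℝ F] [FiniteDimensional ℝ F] [MeasurableSpace F] [BorelSpace F]
    {L : E → F} (hL : Measurable L) {L' : F → E} (h : ∀ x u, ⟪L x, u⟫ = ⟪x, L' u⟫)
    (hL' : ∀ u, ‖L' u‖ = ‖u‖) : (stdGaussian E).map L = stdGaussian F := by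
  refine Measure.ext_of_charFun (funext fun u ↦ ?_)
  rw [charFun_apply, integral_map hL.aemeasurable (by fun_prop)]
  simp_rw [h, ← charFun_apply, charFun_stdGaussian, hL']

theorem map_orthogonalProjectionOnto_stdGaussian (W : Submodule ℝ E) :
    (stdGaussian E).map W.orthogonalProjectionOnto = stdGaussian W :=
  map_stdGaussian_of_forall_inner_eq (by fun_prop) (L' := Subtype.val)
    (fun x u ↦ W.inner_orthogonalProjectionOnto_eq_of_mem_right u x) fun _ ↦ rfl

theorem map_toLp_pi_stdGaussian {ι : Type*} [Fintype ι] :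
    (Measure.pi fun _ : ι ↦ stdGaussian E).map (WithLp.toLp 2) =
      stdGaussian (PiLp 2 fun _ : ι ↦ E) := by
  refine Measure.ext_of_charFun (funext fun t ↦ ?_)
  simp_rw [charFun_pi, charFun_stdGaussian, ← Complex.exp_sum, ← Complex.ofReal_pow,
    PiLp.norm_sq_eq_of_L2]
  simp [Finset.sum_div, neg_div]

theorem lintegral_enorm_sq_strongDual_stdGaussian (L : StrongDual ℝ E) :
    ∫⁻ x, ‖L x‖ₑ ^ 2 ∂stdGaussian E = ‖L‖ₑ ^ 2 := by
  have h := (IsGaussian.memLp_dual (stdGaussian E) L 2 (by simp)).ofReal_variance_eq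
  rw [variance_dual_stdGaussian, evariance, integral_strongDual_stdGaussian] at h
  simpa [ENNReal.ofReal_pow] using h.symm

theorem enorm_sq_eq_sum_of_norm_sq_eq_sum {V ι : Type*} [SeminormedAddCommGroup V]
    [Fintype ι] {v : V} {x : ι → ℝ} (h : ‖v‖ ^ 2 = ∑ i, x i ^ 2) : ‖v‖ₑ ^ 2 = ∑ i, ‖x i‖ₑ ^ 2 := by
  have ofReal_sq (i : ι) : ‖x i‖ₑ ^ 2 = ENNReal.ofReal (x i ^ 2) := by
    rw [← ofReal_norm, ← ENNReal.ofReal_pow (norm_nonneg _), Real.norm_eq_abs, sq_abs]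
  simp_rw [ofReal_sq]
  rw [← ofReal_norm, ← ENNReal.ofReal_pow (norm_nonneg _), h,
    ENNReal.ofReal_sum_of_nonneg fun i _ ↦ sq_nonneg _]

theorem lintegral_enorm_sq_clm_stdGaussian {F ι : Type*} [NormedAddCommGroup F]
    [InnerProductSpace ℝ F] [FiniteDimensional ℝ F] [Fintype ι] (L : E →L[ℝ] F)
    (b : OrthonormalBasis ι ℝ E) :
    ∫⁻ x, ‖L x‖ₑ ^ 2 ∂stdGaussian E = ∑ j, ‖L (b j)‖ₑ ^ 2 := by
  let c := stdOrthonormalBasis ℝ F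
  have parseval (v : F) : ‖v‖ₑ ^ 2 = ∑ i, ‖⟪c i, v⟫‖ₑ ^ 2 :=
    enorm_sq_eq_sum_of_norm_sq_eq_sum (c.sum_sq_inner_right v).symm
  calc ∫⁻ x, ‖L x‖ₑ ^ 2 ∂stdGaussian E
      = ∑ i, ∫⁻ x, ‖(innerSL ℝ (c i) ∘L L) x‖ₑ ^ 2 ∂stdGaussian E := by
        simp_rw [parseval (L _)]
        exact lintegral_finsetSum _ fun i _ ↦
          ((innerSL ℝ (c i) ∘L L).measurable.enorm.pow_const 2)
    _ = ∑ i, ∑ j, ‖⟪c i, L (b j)⟫‖ₑ ^ 2 := Finset.sum_congr rfl fun i _ ↦ by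
        rw [lintegral_enorm_sq_strongDual_stdGaussian]
        exact enorm_sq_eq_sum_of_norm_sq_eq_sum (b.norm_dual (innerSL ℝ (c i) ∘L L))
    _ = ∑ j, ‖L (b j)‖ₑ ^ 2 := by
        simp_rw [parseval (L _)]
        exact Finset.sum_comm

theorem integral_exp_neg_mul_sq_gaussianReal {s : ℝ} (hs : 0 < s) :
    ∫ x, Real.exp (-((s - 1) / 2 * x ^ 2)) ∂gaussianReal 0 1 = s ^ (-(1 / 2) : ℝ) := by
  have density_mul (x : ℝ) : gaussianPDFReal 0 1 x • Real.exp (-((s - 1) / 2 * x ^ 2)) =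
      (√(2 * Real.pi))⁻¹ * Real.exp (-(s / 2) * x ^ 2) := by
    simp only [gaussianPDFReal, smul_eq_mul, NNReal.coe_one, mul_one, sub_zero]
    rw [mul_assoc, ← Real.exp_add]
    ring_nf
  rw [integral_gaussianReal_eq_integral_smul one_ne_zero]
  simp_rw [density_mul]
  rw [integral_const_mul, integral_gaussian, Real.rpow_neg hs.le, ← Real.sqrt_eq_rpow,
    ← Real.sqrt_inv, ← Real.sqrt_inv, ← Real.sqrt_mul (by positivity)]
  congr 1
  field_simp

theorem integral_exp_neg_mul_norm_sq_stdGaussian {s : ℝ} (hs : 0 < s) :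
    ∫ x, Real.exp (-((s - 1) / 2 * ‖x‖ ^ 2)) ∂stdGaussian E =
      s ^ (-(finrank ℝ E / 2) : ℝ) := by
  have norm_sq (x : Fin (finrank ℝ E) → ℝ) :
      ‖∑ i, x i • stdOrthonormalBasis ℝ E i‖ ^ 2 = ∑ i, x i ^ 2 := by
    rw [← (stdOrthonormalBasis ℝ E).sum_sq_inner_right]
    simp_rw [(stdOrthonormalBasis ℝ E).orthonormal.inner_right_fintype]
  rw [stdGaussian, integral_map (Measurable.aemeasurable (by fun_prop)) (by fun_prop)]
  simp_rw [norm_sq, Finset.mul_sum, ← Finset.sum_neg_distrib, Real.exp_sum]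
  rw [integral_fintype_prod_eq_pow (fun x : ℝ ↦ Real.exp (-((s - 1) / 2 * x ^ 2))),
    integral_exp_neg_mul_sq_gaussianReal hs, Fintype.card_fin, ← Real.rpow_mul_natCast hs.le]
  ring_nf

-- With the Laplace integral started at `1`, the variable `s` is the precision of the Gaussian
-- weight that appears when `a = ‖x‖ ^ 2` is integrated against `stdGaussian`.
theorem inv_ofReal_eq_lintegral_exp {a : ℝ} (ha : 0 ≤ a) :
    (ENNReal.ofReal a)⁻¹ =
      2⁻¹ * ∫⁻ s in Set.Ioi (1 : ℝ), ENNReal.ofReal (Real.exp (-((s - 1) / 2 * a))) := by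
  rcases ha.eq_or_lt with rfl | ha
  · simp
  have hneg : -(a / 2) < 0 := by linarith
  have factor (s : ℝ) :
      Real.exp (-((s - 1) / 2 * a)) = Real.exp (a / 2) * Real.exp (-(a / 2) * s) := by
    rw [← Real.exp_add]
    ring_nf
  simp_rw [factor]
  rw [← ofReal_integral_eq_lintegral_ofReal ((integrableOn_exp_mul_Ioi hneg 1).const_mul _)
      (.of_forall fun s ↦ by positivity),
    integral_const_mul, integral_exp_mul_Ioi hneg, ← ENNReal.ofReal_inv_of_pos ha,
    ← ENNReal.ofReal_ofNat, ← ENNReal.ofReal_inv_of_pos two_pos,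
    ← ENNReal.ofReal_mul (by positivity)]
  congr 1
  rw [mul_one, neg_div_neg_eq, mul_div_assoc', ← Real.exp_add, add_neg_cancel, Real.exp_zero]
  field_simp

theorem lintegral_rpow_neg_Ioi {q : ℝ} (hq : 1 < q) :
    ∫⁻ s in Set.Ioi (1 : ℝ), ENNReal.ofReal (s ^ (-q)) = ENNReal.ofReal (1 / (q - 1)) := by
  rw [← ofReal_integral_eq_lintegral_ofReal (integrableOn_Ioi_rpow_of_lt (by linarith) one_pos),
    integral_Ioi_rpow_of_lt (by linarith) one_pos]
  · rw [Real.one_rpow, ← neg_div_neg_eq]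
    ring_nf
  · exact ae_restrict_of_forall_mem measurableSet_Ioi fun s hs ↦
      Real.rpow_nonneg (one_pos.trans hs).le _

theorem lintegral_inv_enorm_sq_stdGaussian (h : 2 < finrank ℝ E) :
    ∫⁻ x, (‖x‖ₑ ^ 2)⁻¹ ∂stdGaussian E = ENNReal.ofReal (1 / (finrank ℝ E - 2)) := by
  have h' : (2 : ℝ) < finrank ℝ E := by exact_mod_cast h
  have laplace {s : ℝ} (hs : 0 < s) :
      ∫⁻ x, ENNReal.ofReal (Real.exp (-((s - 1) / 2 * ‖x‖ ^ 2))) ∂stdGaussian E =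
        ENNReal.ofReal (s ^ (-(finrank ℝ E / 2) : ℝ)) := by
    rw [← integral_exp_neg_mul_norm_sq_stdGaussian hs,
      ofReal_integral_eq_lintegral_ofReal _ (.of_forall fun x ↦ by positivity)]
    refine .of_integral_ne_zero ?_
    rw [integral_exp_neg_mul_norm_sq_stdGaussian hs]
    positivity
  calc ∫⁻ x, (‖x‖ₑ ^ 2)⁻¹ ∂stdGaussian E
      = ∫⁻ x, 2⁻¹ * (∫⁻ s in Set.Ioi (1 : ℝ),
          ENNReal.ofReal (Real.exp (-((s - 1) / 2 * ‖x‖ ^ 2)))) ∂stdGaussian E := by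
        simp_rw [← inv_ofReal_eq_lintegral_exp (sq_nonneg _),
          ENNReal.ofReal_pow (norm_nonneg _), ofReal_norm]
    _ = 2⁻¹ * ∫⁻ s in Set.Ioi (1 : ℝ), ∫⁻ x, ENNReal.ofReal (Real.exp (-((s - 1) / 2 * ‖x‖ ^ 2)))
          ∂stdGaussian E := by
        rw [lintegral_const_mul' _ _ (by simp),
          lintegral_lintegral_swap (Measurable.aemeasurable (by fun_prop))]
    _ = 2⁻¹ * ∫⁻ s in Set.Ioi (1 : ℝ), ENNReal.ofReal (s ^ (-(finrank ℝ E / 2) : ℝ)) := by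
        congr 1
        exact setLIntegral_congr_fun measurableSet_Ioi fun s hs ↦ laplace (one_pos.trans hs)
    _ = ENNReal.ofReal (1 / (finrank ℝ E - 2)) := by
        rw [lintegral_rpow_neg_Ioi (by linarith), ← ENNReal.ofReal_ofNat,
          ← ENNReal.ofReal_inv_of_pos two_pos, ← ENNReal.ofReal_mul (by positivity)]
        congr 1
        field_simp

theorem lintegral_inv_enorm_sq_starProjection (W : Submodule ℝ E) (h : 2 < finrank ℝ W) :
    ∫⁻ x, (‖W.starProjection x‖ₑ ^ 2)⁻¹ ∂stdGaussian E =
      ENNReal.ofReal (1 / (finrank ℝ W - 2)) := by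
  rw [← lintegral_inv_enorm_sq_stdGaussian h, ← map_orthogonalProjectionOnto_stdGaussian,
    lintegral_map (by fun_prop) (by fun_prop)]
  rfl

theorem lintegral_enorm_sq_sum_inner_smul {ι F : Type*} [Fintype ι]
    [NormedAddCommGroup F] [InnerProductSpace ℝ F] [FiniteDimensional ℝ F] (a : ι → F) (w : E) :
    ∫⁻ y, ‖∑ j, ⟪y j, w⟫ • a j‖ₑ ^ 2 ∂(Measure.pi fun _ : ι ↦ stdGaussian E) =
      ‖w‖ₑ ^ 2 * ∑ j, ‖a j‖ₑ ^ 2 := by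
  classical
  let L : PiLp 2 (fun _ : ι ↦ E) →L[ℝ] F :=
    ∑ j, (innerSL ℝ w ∘L PiLp.proj 2 (fun _ ↦ E) j).smulRight (a j)
  have L_apply (y : PiLp 2 fun _ : ι ↦ E) : L y = ∑ j, ⟪y j, w⟫ • a j := by
    simp [L, real_inner_comm]
  let c := stdOrthonormalBasis ℝ E
  have L_basis (j : Σ _ : ι, Fin (finrank ℝ E)) :
      L (Pi.orthonormalBasis (fun _ ↦ c) j) = ⟪c j.2, w⟫ • a j.1 := by
    rw [L_apply, Finset.sum_eq_single j.1 (fun i _ hij ↦ by simp [hij]) (by simp)]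
    simp
  calc ∫⁻ y, ‖∑ j, ⟪y j, w⟫ • a j‖ₑ ^ 2 ∂(Measure.pi fun _ : ι ↦ stdGaussian E)
      = ∫⁻ y, ‖L y‖ₑ ^ 2 ∂stdGaussian (PiLp 2 fun _ : ι ↦ E) := by
        rw [← map_toLp_pi_stdGaussian,
          lintegral_map (L.continuous.enorm.measurable.pow_const 2) (by fun_prop)]
        simp_rw [L_apply]
    _ = ∑ j, ∑ i, ‖⟪c i, w⟫ • a j‖ₑ ^ 2 := by
        rw [lintegral_enorm_sq_clm_stdGaussian L (Pi.orthonormalBasis fun _ ↦ c), Fintype.sum_sigma]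
        simp_rw [L_basis]
    _ = ‖w‖ₑ ^ 2 * ∑ j, ‖a j‖ₑ ^ 2 := by
        simp_rw [enorm_smul, mul_pow, ← Finset.sum_mul, ← Finset.mul_sum]
        rw [enorm_sq_eq_sum_of_norm_sq_eq_sum (c.sum_sq_inner_right w).symm]

theorem lmarginal_enorm_sq_sum_inner_smul {ι F : Type*} [DecidableEq ι]
    [NormedAddCommGroup F] [InnerProductSpace ℝ F] [FiniteDimensional ℝ F] (s : Finset ι)
    (a : ι → F) (w : E) (x : ι → E) :
    (∫⋯∫⁻_s, (fun y ↦ ‖∑ j ∈ s, ⟪y j, w⟫ • a j‖ₑ ^ 2) ∂fun _ ↦ stdGaussian E) x =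
      ‖w‖ₑ ^ 2 * ∑ j ∈ s, ‖a j‖ₑ ^ 2 := by
  have restrict (y : s → E) : ∑ j ∈ s, ⟪Function.updateFinset x s y j, w⟫ • a j =
      ∑ j : s, ⟪y j, w⟫ • a j := by
    rw [← Finset.sum_coe_sort]
    simp [Function.updateFinset]
  simp_rw [lmarginal, restrict]
  rw [lintegral_enorm_sq_sum_inner_smul (fun j : s ↦ a j), Finset.sum_coe_sort s (‖a ·‖ₑ ^ 2)]

theorem lintegral_inv_enorm_sq_starProjection_orthogonal_span_le {ι : Type*} (x : ι → E)
    {s : Finset ι} (hs : s.card + 2 < finrank ℝ E) :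
    ∫⁻ z, (‖(Submodule.span ℝ (x '' s))ᗮ.starProjection z‖ₑ ^ 2)⁻¹ ∂stdGaussian E ≤
      ENNReal.ofReal (1 / (finrank ℝ E - s.card - 2)) := by
  have finrank_le := finrank_le_finrank_orthogonal_span_image_add_card x s
  rw [lintegral_inv_enorm_sq_starProjection _ (by omega)]
  have hs' : (s.card + 2 : ℝ) < finrank ℝ E := by exact_mod_cast hs
  have finrank_le' : (finrank ℝ E : ℝ) ≤ finrank ℝ (Submodule.span ℝ (x '' s))ᗮ + s.card := by
    exact_mod_cast finrank_le
  gcongr ENNReal.ofReal (1 / ?_) <;> linarith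

end Gaussian

section Contraction

variable {ι E F F' : Type*} [Fintype ι] [DecidableEq ι]
  [NormedAddCommGroup E] [InnerProductSpace ℝ E] [FiniteDimensional ℝ E]
  [MeasurableSpace E] [BorelSpace E]
  [NormedAddCommGroup F] [InnerProductSpace ℝ F] [FiniteDimensional ℝ F]
  [SeminormedAddCommGroup F'] [NormedSpace ℝ F'] {a : ι → F}
  {R : (ι → E) → F →ₗ[ℝ] F'} {K : Finset ι} {i : ι}

theorem lmarginal_compl_enorm_sq_apply_le (hR : ∀ t v, ‖R t v‖ₑ ≤ ‖v‖ₑ)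
    (hker : ∀ t w, R t (∑ j, ⟪t j, w⟫ • a j) = 0) (hi : i ∈ K) {x : ι → E} {w : E} (hw : w ≠ 0)
    (hxi : ⟪x i, w⟫ = ‖w‖ ^ 2) (hx : ∀ j ∈ K.erase i, ⟪x j, w⟫ = 0) :
    (∫⋯∫⁻_Kᶜ, (fun t ↦ ‖R t (a i)‖ₑ ^ 2) ∂fun _ ↦ stdGaussian E) x ≤
      (‖w‖ₑ ^ 2)⁻¹ * ∑ j ∈ Kᶜ, ‖a j‖ₑ ^ 2 := by
  have hw_top : ‖w‖ₑ ^ 2 ≠ ⊤ := by finiteness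
  have hw_zero : ‖w‖ₑ ^ 2 ≠ 0 := by simpa using hw
  let t (y : (Kᶜ : Finset ι) → E) : ι → E := Function.updateFinset x Kᶜ y
  have t_apply (y) {j : ι} (hj : j ∈ K) : t y j = x j := by simp [t, Function.updateFinset, hj]
  have pointwise (y) : ‖R (t y) (a i)‖ₑ ^ 2 ≤
      ((‖w‖ₑ ^ 2) ^ 2)⁻¹ * ‖∑ j ∈ Kᶜ, ⟪t y j, w⟫ • a j‖ₑ ^ 2 := by
    rw [mul_comm, ← div_eq_mul_inv, ENNReal.le_div_iff_mul_le (by simp [hw]) (.inl (by finiteness)),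
      mul_comm, ← mul_pow]
    gcongr
    have h := enorm_mul_enorm_apply_le (hR (t y)) (hker (t y) w) hi fun j hj ↦ by
      rw [t_apply y (Finset.mem_of_mem_erase hj), hx j hj]
    rwa [t_apply y hi, hxi, enorm_pow, enorm_norm] at h
  calc ∫⁻ y, ‖R (t y) (a i)‖ₑ ^ 2 ∂(Measure.pi fun _ ↦ stdGaussian E)
      ≤ ∫⁻ y, ((‖w‖ₑ ^ 2) ^ 2)⁻¹ * ‖∑ j ∈ Kᶜ, ⟪t y j, w⟫ • a j‖ₑ ^ 2
          ∂(Measure.pi fun _ ↦ stdGaussian E) := lintegral_mono pointwise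
    _ = ((‖w‖ₑ ^ 2) ^ 2)⁻¹ * (‖w‖ₑ ^ 2 * ∑ j ∈ Kᶜ, ‖a j‖ₑ ^ 2) := by
        rw [lintegral_const_mul' _ _ (by simp [hw]), ← lmarginal_enorm_sq_sum_inner_smul Kᶜ a w x]
        rfl
    _ = (‖w‖ₑ ^ 2)⁻¹ * ∑ j ∈ Kᶜ, ‖a j‖ₑ ^ 2 := by
        rw [sq (‖w‖ₑ ^ 2), ENNReal.mul_inv (.inl hw_zero) (.inl hw_top), mul_assoc,
          ENNReal.inv_mul_cancel_left hw_zero hw_top]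

theorem lmarginal_insert_compl_enorm_sq_apply_le (hR : ∀ t v, ‖R t v‖ₑ ≤ ‖v‖ₑ)
    (hker : ∀ t w, R t (∑ j, ⟪t j, w⟫ • a j) = 0) (hi : i ∈ K) (hK : K.card + 1 < finrank ℝ E)
    (hmeas : Measurable fun t ↦ ‖R t (a i)‖ₑ) (x : ι → E) :
    (∫⋯∫⁻_insert i Kᶜ, (fun t ↦ ‖R t (a i)‖ₑ ^ 2) ∂fun _ ↦ stdGaussian E) x ≤
      ENNReal.ofReal (1 / (finrank ℝ E - K.card - 1)) * ∑ j ∈ Kᶜ, ‖a j‖ₑ ^ 2 := by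
  let W := (Submodule.span ℝ (x '' K.erase i))ᗮ
  have card_erase : (K.erase i).card + 1 = K.card := Finset.card_erase_add_one hi
  have inv_bound : ∫⁻ z, (‖W.starProjection z‖ₑ ^ 2)⁻¹ ∂stdGaussian E ≤
      ENNReal.ofReal (1 / (finrank ℝ E - (K.erase i).card - 2)) :=
    lintegral_inv_enorm_sq_starProjection_orthogonal_span_le x (by lia)
  -- In `ℝ≥0∞` the inverse of zero is `⊤`, so a finite integral rules out vanishing projections.
  have starProjection_ne_zero : ∀ᵐ z ∂stdGaussian E, W.starProjection z ≠ 0 := by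
    filter_upwards [ae_lt_top (by fun_prop) (inv_bound.trans_lt ENNReal.ofReal_lt_top).ne]
      with z hz h
    simp [h] at hz
  have inner_bound (z : E) (hz : W.starProjection z ≠ 0) := by
    refine lmarginal_compl_enorm_sq_apply_le hR hker hi hz (x := Function.update x i z) ?_
      fun j hj ↦ ?_
    · rw [Function.update_self, real_inner_comm]
      exact W.re_inner_starProjection_eq_normSq z
    · rw [Function.update_of_ne (Finset.ne_of_mem_erase hj)]
      exact W.starProjection_apply_mem z _ (Submodule.subset_span ⟨j, hj, rfl⟩)
  rw [lmarginal_insert _ (hmeas.pow_const 2) (by simpa using hi)]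
  calc ∫⁻ z, (∫⋯∫⁻_Kᶜ, (fun t ↦ ‖R t (a i)‖ₑ ^ 2) ∂fun _ ↦ stdGaussian E) (Function.update x i z)
        ∂stdGaussian E
      ≤ ∫⁻ z, (‖W.starProjection z‖ₑ ^ 2)⁻¹ * ∑ j ∈ Kᶜ, ‖a j‖ₑ ^ 2 ∂stdGaussian E :=
        lintegral_mono_ae (starProjection_ne_zero.mono inner_bound)
    _ = (∫⁻ z, (‖W.starProjection z‖ₑ ^ 2)⁻¹ ∂stdGaussian E) * ∑ j ∈ Kᶜ, ‖a j‖ₑ ^ 2 :=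
        lintegral_mul_const _ (by fun_prop)
    _ ≤ ENNReal.ofReal (1 / (finrank ℝ E - (K.erase i).card - 2)) * ∑ j ∈ Kᶜ, ‖a j‖ₑ ^ 2 := by
        gcongr
    _ = ENNReal.ofReal (1 / (finrank ℝ E - K.card - 1)) * ∑ j ∈ Kᶜ, ‖a j‖ₑ ^ 2 := by
        rw [← card_erase]
        push_cast
        ring_nf

theorem lintegral_enorm_sq_apply_le_of_mem (hR : ∀ t v, ‖R t v‖ₑ ≤ ‖v‖ₑ)
    (hker : ∀ t w, R t (∑ j, ⟪t j, w⟫ • a j) = 0) (hi : i ∈ K) (hK : K.card + 1 < finrank ℝ E)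
    (hmeas : Measurable fun t ↦ ‖R t (a i)‖ₑ) :
    ∫⁻ t, ‖R t (a i)‖ₑ ^ 2 ∂(Measure.pi fun _ ↦ stdGaussian E) ≤
      ENNReal.ofReal (1 / (finrank ℝ E - K.card - 1)) * ∑ j ∈ Kᶜ, ‖a j‖ₑ ^ 2 := by
  let c := ENNReal.ofReal (1 / (finrank ℝ E - K.card - 1)) * ∑ j ∈ Kᶜ, ‖a j‖ₑ ^ 2
  calc ∫⁻ t, ‖R t (a i)‖ₑ ^ 2 ∂(Measure.pi fun _ ↦ stdGaussian E)
      ≤ ∫⁻ _, c ∂(Measure.pi fun _ : ι ↦ stdGaussian E) := by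
        refine lintegral_le_of_lmarginal_le (insert i Kᶜ) (hmeas.pow_const 2) measurable_const
          fun x ↦ ?_
        exact (lmarginal_insert_compl_enorm_sq_apply_le hR hker hi hK hmeas x).trans_eq
          (by simp [lmarginal, c])
    _ = c := by simp

theorem lintegral_sum_enorm_sq_apply_le (hR : ∀ t v, ‖R t v‖ₑ ≤ ‖v‖ₑ)
    (hker : ∀ t w, R t (∑ j, ⟪t j, w⟫ • a j) = 0) (hK : K.card + 1 < finrank ℝ E)
    (hmeas : ∀ i, Measurable fun t ↦ ‖R t (a i)‖ₑ) :
    ∫⁻ t, ∑ i, ‖R t (a i)‖ₑ ^ 2 ∂(Measure.pi fun _ ↦ stdGaussian E) ≤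
      ENNReal.ofReal (1 + K.card / (finrank ℝ E - K.card - 1)) * ∑ j ∈ Kᶜ, ‖a j‖ₑ ^ 2 := by
  have hK' : (K.card + 1 : ℝ) < finrank ℝ E := by exact_mod_cast hK
  have compl_bound (j : ι) :
      ∫⁻ t, ‖R t (a j)‖ₑ ^ 2 ∂(Measure.pi fun _ ↦ stdGaussian E) ≤ ‖a j‖ₑ ^ 2 :=
    calc ∫⁻ t, ‖R t (a j)‖ₑ ^ 2 ∂(Measure.pi fun _ ↦ stdGaussian E)
        ≤ ∫⁻ _, ‖a j‖ₑ ^ 2 ∂(Measure.pi fun _ : ι ↦ stdGaussian E) := by gcongr; exact hR _ _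
      _ = ‖a j‖ₑ ^ 2 := by simp
  set τ := ∑ j ∈ Kᶜ, ‖a j‖ₑ ^ 2
  calc ∫⁻ t, ∑ i, ‖R t (a i)‖ₑ ^ 2 ∂(Measure.pi fun _ ↦ stdGaussian E)
      = ∑ i ∈ Kᶜ, ∫⁻ t, ‖R t (a i)‖ₑ ^ 2 ∂(Measure.pi fun _ ↦ stdGaussian E) +
          ∑ i ∈ K, ∫⁻ t, ‖R t (a i)‖ₑ ^ 2 ∂(Measure.pi fun _ ↦ stdGaussian E) := by
        rw [lintegral_finsetSum _ fun i _ ↦ (hmeas i).pow_const 2, Finset.sum_compl_add_sum]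
    _ ≤ τ + ∑ _ ∈ K, ENNReal.ofReal (1 / (finrank ℝ E - K.card - 1)) * τ :=
        add_le_add (Finset.sum_le_sum fun j _ ↦ compl_bound j) (Finset.sum_le_sum fun i hi ↦
          lintegral_enorm_sq_apply_le_of_mem hR hker hi hK (hmeas i))
    _ = ENNReal.ofReal (1 + K.card / (finrank ℝ E - K.card - 1)) * τ := by
        rw [Finset.sum_const, nsmul_eq_mul, ← mul_assoc, ← ENNReal.ofReal_natCast,
          ← ENNReal.ofReal_mul (by positivity), mul_one_div, ENNReal.ofReal_add zero_le_one
          (div_nonneg (by positivity) (by linarith)), ENNReal.ofReal_one, add_mul, one_mul]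

end Contraction

section Measurability

variable {Ω : Type*} [MeasurableSpace Ω]

theorem measurable_toEuclideanLin_apply {m n : Type*} [Fintype n]
    [DecidableEq n] {P : Ω → Matrix m n ℝ} (hP : ∀ i j, Measurable fun ω ↦ P ω i j)
    (v : EuclideanSpace ℝ n) : Measurable fun ω ↦ (P ω).toEuclideanLin v := by
  simp only [toLpLin_apply]
  refine (WithLp.measurable_toLp 2 _).comp (measurable_pi_lambda _ fun i ↦ ?_)
  simp only [mulVec, dotProduct]
  exact Finset.measurable_sum _ fun j _ ↦ (hP i j).mul_const (v j)

theorem measurable_frobNorm {m n : ℕ} {M : Ω → Matrix (Fin m) (Fin n) ℝ}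
    (hM : ∀ i j, Measurable fun ω ↦ M ω i j) : Measurable fun ω ↦ frobNorm (M ω) :=
  (Finset.measurable_sum _ fun i _ ↦
    Finset.measurable_sum _ fun j _ ↦ (hM i j).pow_const 2).sqrt

theorem measurable_matrix_mul {l m n : Type*} [Fintype m] {M : Ω → Matrix l m ℝ}
    {N : Ω → Matrix m n ℝ}
    (hM : ∀ i j, Measurable fun ω ↦ M ω i j) (hN : ∀ i j, Measurable fun ω ↦ N ω i j)
    (i : l) (j : n) : Measurable fun ω ↦ (M ω * N ω) i j := by
  simp only [mul_apply]
  exact Finset.measurable_sum _ fun k _ ↦ (hM i k).mul (hN k j)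

end Measurability

section Rotation

variable {ι κ E : Type*} [Fintype ι] [Fintype κ]
  [NormedAddCommGroup E] [InnerProductSpace ℝ E] [FiniteDimensional ℝ E]

theorem sum_norm_sq_sum_smul_eq (b : OrthonormalBasis κ ℝ (EuclideanSpace ℝ ι)) (u : ι → E) :
    ∑ j, ‖∑ i, b j i • u i‖ ^ 2 = ∑ i, ‖u i‖ ^ 2 := by
  classical
  simpa [Fintype.linearCombination_apply, Pi.single_apply] using
    sum_norm_sq_apply_orthonormalBasis_eq (Fintype.linearCombination ℝ u ∘ₗ
      (WithLp.linearEquiv 2 ℝ (ι → ℝ)).toLinearMap) b (EuclideanSpace.basisFun ι ℝ)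

theorem map_sum_smul_pi_stdGaussian [MeasurableSpace E] [BorelSpace E]
    (b : OrthonormalBasis κ ℝ (EuclideanSpace ℝ ι)) :
    (Measure.pi fun _ : κ ↦ stdGaussian E).map (fun t i ↦ ∑ j, b j i • t j) =
      Measure.pi fun _ : ι ↦ stdGaussian E := by
  apply (MeasurableEquiv.toLp 2 (ι → E)).map_measurableEquiv_injective
  simp only [MeasurableEquiv.coe_toLp]
  rw [map_toLp_pi_stdGaussian, Measure.map_map (by fun_prop) (by fun_prop)]
  let L (x : PiLp 2 fun _ : κ ↦ E) : PiLp 2 fun _ : ι ↦ E := WithLp.toLp 2 fun i ↦ ∑ j, b j i • x j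
  let L' (u : PiLp 2 fun _ : ι ↦ E) : PiLp 2 fun _ : κ ↦ E := WithLp.toLp 2 fun j ↦ ∑ i, b j i • u i
  have L_meas : Measurable L := by fun_prop
  have inner_L (x u) : ⟪L x, u⟫ = ⟪x, L' u⟫ := by
    simp only [L, L', PiLp.inner_apply, sum_inner, inner_sum, real_inner_smul_left,
      real_inner_smul_right]
    exact Finset.sum_comm
  have norm_L' (u) : ‖L' u‖ = ‖u‖ := by
    rw [← sq_eq_sq₀ (norm_nonneg _) (norm_nonneg _), PiLp.norm_sq_eq_of_L2, PiLp.norm_sq_eq_of_L2]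
    exact sum_norm_sq_sum_smul_eq b u
  rw [← map_stdGaussian_of_forall_inner_eq L_meas inner_L norm_L', ← map_toLp_pi_stdGaussian,
    Measure.map_map L_meas (by fun_prop)]
  rfl

theorem map_sum_smul_pi_stdGaussian_eq_gaussMeasure {d n : ℕ}
    (b : OrthonormalBasis (Fin d) ℝ (EuclideanSpace ℝ (Fin d))) :
    (Measure.pi fun _ ↦ stdGaussian (EuclideanSpace ℝ (Fin n))).map
      (fun t i ↦ (∑ j, b j i • t j).ofLp) = gaussMeasure d n := by
  have ofLp_map : (stdGaussian (EuclideanSpace ℝ (Fin n))).map WithLp.ofLp =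
      Measure.pi fun _ ↦ gaussianReal 0 1 := by
    rw [← map_pi_eq_stdGaussian, Measure.map_map (by fun_prop) (by fun_prop)]
    exact Measure.map_id
  calc (Measure.pi fun _ ↦ stdGaussian (EuclideanSpace ℝ (Fin n))).map
        (fun t i ↦ (∑ j, b j i • t j).ofLp)
      = ((Measure.pi fun _ ↦ stdGaussian (EuclideanSpace ℝ (Fin n))).map
          (fun t i ↦ ∑ j, b j i • t j)).map (fun s i ↦ (s i).ofLp) := by
        rw [Measure.map_map (by fun_prop) (by fun_prop)]
        rfl
    _ = gaussMeasure d n := by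
        rw [map_sum_smul_pi_stdGaussian, Measure.pi_map_pi fun _ ↦ by fun_prop, ofLp_map,
          gaussMeasure]

theorem sum_inner_smul_toEuclideanLin {m d n : ℕ} (A : Matrix (Fin m) (Fin d) ℝ)
    (b : OrthonormalBasis (Fin d) ℝ (EuclideanSpace ℝ (Fin d)))
    (t : Fin d → EuclideanSpace ℝ (Fin n)) (w : EuclideanSpace ℝ (Fin n)) :
    ∑ j, ⟪t j, w⟫ • A.toEuclideanLin (b j) =
      (A * Matrix.of fun i ↦ (∑ j, b j i • t j).ofLp).toEuclideanLin w := by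
  have apply_of (u : Fin d → EuclideanSpace ℝ (Fin n)) (i : Fin d) :
      (Matrix.of fun i ↦ (u i).ofLp).toEuclideanLin w i = ⟪u i, w⟫ := by
    simp [EuclideanSpace.inner_eq_star_dotProduct, mulVec, dotProduct_comm]
  have sketch : (Matrix.of fun i ↦ (∑ j, b j i • t j).ofLp).toEuclideanLin w =
      ∑ j, ⟪t j, w⟫ • b j := by
    ext i
    rw [apply_of]
    simp [sum_inner, real_inner_smul_left, mul_comm]
  rw [toEuclideanLin, toLpLin_mul_same, LinearMap.comp_apply, ← toEuclideanLin, sketch, map_sum]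
  simp_rw [map_smul]

theorem lintegral_frobNorm_sq_mul_le {m d n r : ℕ} (A B : Matrix (Fin m) (Fin d) ℝ)
    {P : (Fin d → Fin n → ℝ) → Matrix (Fin r) (Fin m) ℝ} (hmeas : ∀ i j, Measurable fun s ↦ P s i j)
    (hP : ∀ s v, ‖(P s).toEuclideanLin v‖ ≤ ‖v‖) (hker : ∀ s, P s * (A * Matrix.of s) = 0)
    (hB : B.rank + 1 < n) :
    ∫⁻ s, ENNReal.ofReal (frobNorm (P s * A) ^ 2) ∂gaussMeasure d n ≤
      ENNReal.ofReal ((1 + B.rank / (n - B.rank - 1)) * frobNorm (A - B) ^ 2) := by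
  obtain ⟨b, K, hK, hBK⟩ :=
    exists_orthonormalBasis_card_le_apply_eq_zero finrank_euclideanSpace_fin B.toEuclideanLin
  rw [toEuclideanLin, toLpLin_eq_toLin, ← rank_eq_finrank_range_toLin] at hK
  let s (t : Fin d → EuclideanSpace ℝ (Fin n)) (i : Fin d) := (∑ j, b j i • t j).ofLp
  let R (t : Fin d → EuclideanSpace ℝ (Fin n)) := (P (s t)).toEuclideanLin
  have hs : Measurable s := by fun_prop
  have R_ker (t w) : R t (∑ j, ⟪t j, w⟫ • A.toEuclideanLin (b j)) = 0 := by
    rw [sum_inner_smul_toEuclideanLin, ← LinearMap.comp_apply, ← toLpLin_mul_same, hker, map_zero,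
      LinearMap.zero_apply]
  have R_meas (v : EuclideanSpace ℝ (Fin m)) : Measurable fun t ↦ ‖R t v‖ₑ :=
    (measurable_toEuclideanLin_apply (fun i j ↦ (hmeas i j).comp hs) v).enorm
  have frob_eq (t) : ENNReal.ofReal (frobNorm (P (s t) * A) ^ 2) =
      ∑ j, ‖R t (A.toEuclideanLin (b j))‖ₑ ^ 2 := by
    rw [ofReal_frobNorm_sq_eq_sum_enorm_sq _ b, toEuclideanLin, toLpLin_mul_same]
    rfl
  have denom_pos : 0 < (n - B.rank - 1 : ℝ) := by
    have : (B.rank + 1 : ℝ) < n := by exact_mod_cast hB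
    linarith
  calc ∫⁻ s, ENNReal.ofReal (frobNorm (P s * A) ^ 2) ∂gaussMeasure d n
      ≤ ∫⁻ t, ∑ j, ‖R t (A.toEuclideanLin (b j))‖ₑ ^ 2
          ∂(Measure.pi fun _ ↦ stdGaussian (EuclideanSpace ℝ (Fin n))) := by
        rw [← map_sum_smul_pi_stdGaussian_eq_gaussMeasure b]
        exact (lintegral_map_le _ _).trans_eq (lintegral_congr frob_eq)
    _ ≤ ENNReal.ofReal (1 + K.card / (n - K.card - 1)) *
          ∑ j ∈ Kᶜ, ‖A.toEuclideanLin (b j)‖ₑ ^ 2 := by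
        simpa only [finrank_euclideanSpace_fin] using lintegral_sum_enorm_sq_apply_le
          (fun t v ↦ enorm_le_iff_norm_le.2 (hP _ v)) R_ker
          (by rw [finrank_euclideanSpace_fin]; lia) fun j ↦ R_meas _
    _ ≤ ENNReal.ofReal (1 + B.rank / (n - B.rank - 1)) * ENNReal.ofReal (frobNorm (A - B) ^ 2) := by
        gcongr
        exact sum_compl_enorm_sq_le_ofReal_frobNorm_sub_sq A hBK
    _ = ENNReal.ofReal ((1 + B.rank / (n - B.rank - 1)) * frobNorm (A - B) ^ 2) := by
        rw [← ENNReal.ofReal_mul (by positivity)]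

theorem integral_frobNorm_sq_mul_le {m d n r : ℕ} (A B : Matrix (Fin m) (Fin d) ℝ)
    {P : (Fin d → Fin n → ℝ) → Matrix (Fin r) (Fin m) ℝ}
    (hmeas : ∀ i j, Measurable fun s ↦ P s i j) (hP : ∀ s v, ‖(P s).toEuclideanLin v‖ ≤ ‖v‖)
    (hker : ∀ s, P s * (A * Matrix.of s) = 0) (hB : B.rank + 1 < n) :
    ∫ s, frobNorm (P s * A) ^ 2 ∂gaussMeasure d n ≤
      (1 + B.rank / (n - B.rank - 1)) * frobNorm (A - B) ^ 2 := by
  have product_meas := measurable_matrix_mul hmeas fun i j ↦ measurable_const (a := A i j)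
  have frob_meas : Measurable fun s ↦ frobNorm (P s * A) ^ 2 :=
    (measurable_frobNorm product_meas).pow_const 2
  have denom_pos : 0 < (n - B.rank - 1 : ℝ) := by
    have : (B.rank + 1 : ℝ) < n := by exact_mod_cast hB
    linarith
  rw [integral_eq_lintegral_of_nonneg_ae (.of_forall fun _ ↦ sq_nonneg _)
    frob_meas.aestronglyMeasurable]
  exact ENNReal.toReal_le_of_le_ofReal (by positivity)
    (lintegral_frobNorm_sq_mul_le A B hmeas hP hker hB)

end Rotation

theorem stmt17_general {m d l r k : ℕ} (hk : k + 1 < l) (A B : Matrix (Fin m) (Fin d) ℝ)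
    (hB : B.rank ≤ k) {Q : (Fin d → Fin l → ℝ) → Fin m → Fin r → ℝ} (hQmeas : Measurable Q)
    (hQorth : ∀ s, (Matrix.of (Q s))ᵀ * Matrix.of (Q s) = 1)
    (hQspan : ∀ s, LinearMap.range (A * Matrix.of s).mulVecLin ≤
      LinearMap.range (Matrix.of (Q s)).mulVecLin) :
    ∫ s, frobNorm ((1 - Matrix.of (Q s) * (Matrix.of (Q s))ᵀ) * A) ^ 2 ∂gaussMeasure d l ≤
      (1 + k / (l - k - 1)) * frobNorm (A - B) ^ 2 := by
  have Q_meas (i j) : Measurable fun s ↦ Matrix.of (Q s) i j :=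
    (measurable_pi_apply j).comp ((measurable_pi_apply i).comp hQmeas)
  have residual_meas (i j) :
      Measurable fun s ↦ (1 - Matrix.of (Q s) * (Matrix.of (Q s))ᵀ : Matrix _ _ ℝ) i j :=
    (measurable_matrix_mul Q_meas (fun i j ↦ Q_meas j i) i j).const_sub _
  have denom_pos : 0 < (l - k - 1 : ℝ) := by
    have : (k + 1 : ℝ) < l := by exact_mod_cast hk
    linarith
  calc ∫ s, frobNorm ((1 - Matrix.of (Q s) * (Matrix.of (Q s))ᵀ) * A) ^ 2 ∂gaussMeasure d l
      ≤ (1 + B.rank / (l - B.rank - 1)) * frobNorm (A - B) ^ 2 :=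
        integral_frobNorm_sq_mul_le A B residual_meas
          (fun s ↦ norm_toEuclideanLin_one_sub_mul_transpose_le (hQorth s))
          (fun s ↦ one_sub_mul_transpose_mul_eq_zero (hQorth s) (hQspan s)) (by lia)
    _ ≤ (1 + k / (l - k - 1)) * frobNorm (A - B) ^ 2 := by gcongr

theorem stmt17 (d k p : ℕ) (hk : 2 ≤ k) (hp : 2 ≤ p)
    (A : Matrix (Fin d) (Fin d) ℝ)
    (Q : (Fin d → Fin (k + p) → ℝ) → (Fin d → Fin (k + p) → ℝ))
    (hQmeas : Measurable Q)
    (hQorth : ∀ s, (Matrix.of (Q s))ᵀ * Matrix.of (Q s) = 1)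
    (hQspan : ∀ s, LinearMap.range (A * Matrix.of s).mulVecLin ≤
      LinearMap.range (Matrix.of (Q s)).mulVecLin)
    (B : Matrix (Fin d) (Fin d) ℝ) (hB : B.rank ≤ k) :
    (∫ s, (frobNorm ((1 - Matrix.of (Q s) * (Matrix.of (Q s))ᵀ) * A)) ^ 2
        ∂(gaussMeasure d (k + p))) ≤
      (1 + (k : ℝ) / ((p : ℝ) - 1)) * (frobNorm (A - B)) ^ 2 := by
  simpa only [Nat.cast_add, add_sub_cancel_left] using
    stmt17_general (by lia) A B hB hQmeas hQorth hQspan
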